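/- Let w > 1/4 and let y be a real number with -1 ≤ y < 1. Then ∑_{l=0}^∞ (2l+1)·P_l(y)/(l(l+1)+w) > 0; equivalently, the Green's function G = -(1/4π)·∑_{l=0}^∞ (2l+1)P_l(y)/(l(l+1)+w) of the screened Poisson equation on the sphere is strictly negative for every angular separation γ with 0 < γ ≤ π. -/

import Mathlib

open Filter Topology

/-- The Legendre polynomials `P l` on `ℝ`, i.e. the orthogonal polynomials on `[-1,1]`
normalized by `P l 1 = 1`, defined via the Bonnet recurrence
`P 0 y = 1`, `P 1 y = y`, `(n+2) • P (n+2) y = (2n+3) y P (n+1) y - (n+1) P n y`. -/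
noncomputable def legendreP : ℕ → ℝ → ℝ
  | 0, _ => 1
  | 1, y => y
  | (n + 2), y =>
      ((2 * (n : ℝ) + 3) * y * legendreP (n + 1) y - ((n : ℝ) + 1) * legendreP n y) / ((n : ℝ) + 2)

/-!
The `n`-th de la Vallée Poussin mean of a series `∑ t l` weights `t l` by
`ρ n l = n! (n+1)! / ((n-l)! (n+l+1)!)`. These decrease in `l` and tend to `1` as `n → ∞`, so the
means have the same limit as the partial sums. The weights are chosen because
`ρ n l = ρ (n+1) l * (1 - l(l+1) / ((n+1)(n+2)))`: with `l(l+1)` the eigenvalue of `P l`, the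
`n`-th mean `σ n` of the screened series satisfies
`(1 + w / ((n+1)(n+2))) σ (n+1) = σ n + K (n+1) / ((n+1)(n+2))`, where `K n` is the mean of
`∑ (2l+1) P l y`. The latter is the de la Vallée Poussin kernel `(n+1) ((1+y)/2) ^ n ≥ 0`, so `σ n`
loses at most a convergent product of factors and stays above `exp (-w) / w`. In the limit this
bounds the sum of the series, which converges by Abel summation because the partial sums of
`∑ (2l+1) P l y` grow at most linearly when `y < 1`.
-/

/-! ### Summation by parts -/

section SummationByParts

variable {E : Type*} [NormedAddCommGroup E] [NormedSpace ℝ E]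

lemma tendsto_natCast_mul_of_antitone_of_summable {b : ℕ → ℝ} (hb : Antitone b)
    (hs : Summable b) : Tendsto (fun n : ℕ => (n : ℝ) * b n) atTop (𝓝 0) := by
  have nonneg (n : ℕ) : 0 ≤ b n := hb.le_of_tendsto hs.tendsto_atTop_zero n
  have block_tendsto : Tendsto (fun n : ℕ => 2 * ∑ k ∈ Finset.Ico (n / 2) n, b k) atTop (𝓝 0) := by
    have partial_sums := hs.hasSum.tendsto_sum_nat
    have half : Tendsto (fun n : ℕ => n / 2) atTop atTop :=
      Nat.tendsto_div_const_atTop two_ne_zero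
    simpa [Finset.sum_Ico_eq_sub b (Nat.div_le_self _ 2)]
      using (partial_sums.sub (partial_sums.comp half)).const_mul 2
  refine squeeze_zero (fun n => mul_nonneg n.cast_nonneg (nonneg n)) (fun n => ?_) block_tendsto
  have half_le : (n : ℝ) ≤ 2 * (n - n / 2 : ℕ) := by
    exact_mod_cast (by lia : n ≤ 2 * (n - n / 2))
  calc (n : ℝ) * b n ≤ 2 * (n - n / 2 : ℕ) * b n :=
        mul_le_mul_of_nonneg_right half_le (nonneg n)
    _ = 2 * ∑ _k ∈ Finset.Ico (n / 2) n, b n := by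
        rw [Finset.sum_const, Nat.card_Ico, nsmul_eq_mul, mul_assoc]
    _ ≤ 2 * ∑ k ∈ Finset.Ico (n / 2) n, b k := by
        gcongr with k hk
        exact hb (Finset.mem_Ico.1 hk).2.le

lemma sum_succ_mul_sub_succ (b : ℕ → ℝ) (n : ℕ) :
    ∑ k ∈ Finset.range n, ((k : ℝ) + 1) * (b k - b (k + 1))
      = ∑ k ∈ Finset.range n, b k - n * b n := by
  induction n with
  | zero => simp
  | succ n ih =>
    rw [Finset.sum_range_succ, Finset.sum_range_succ b, ih]
    push_cast
    ring

lemma cauchySeq_sum_smul_of_antitone_of_summable {b : ℕ → ℝ} {z : ℕ → E} {C : ℝ}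
    (hb : Antitone b) (hs : Summable b)
    (hz : ∀ n : ℕ, ‖∑ k ∈ Finset.range n, z k‖ ≤ C * n) :
    CauchySeq fun n => ∑ k ∈ Finset.range n, b k • z k := by
  have nonneg (n : ℕ) : 0 ≤ b n := hb.le_of_tendsto hs.tendsto_atTop_zero n
  have mul_tendsto := tendsto_natCast_mul_of_antitone_of_summable hb hs
  have boundary_tendsto :
      Tendsto (fun n => b n • ∑ k ∈ Finset.range (n + 1), z k) atTop (𝓝 0) := by
    have bound_tendsto : Tendsto (fun n : ℕ => C * (n * b n + b n)) atTop (𝓝 0) := by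
      simpa using (mul_tendsto.add hs.tendsto_atTop_zero).const_mul C
    refine squeeze_zero_norm (fun n => ?_) bound_tendsto
    calc ‖b n • ∑ k ∈ Finset.range (n + 1), z k‖
        = b n * ‖∑ k ∈ Finset.range (n + 1), z k‖ := by
          rw [norm_smul, Real.norm_of_nonneg (nonneg n)]
      _ ≤ b n * (C * (n + 1 : ℕ)) := mul_le_mul_of_nonneg_left (hz _) (nonneg n)
      _ = C * (n * b n + b n) := by push_cast; ring
  have differences_cauchy : CauchySeq fun n =>
      ∑ k ∈ Finset.range n, (b (k + 1) - b k) • ∑ j ∈ Finset.range (k + 1), z j := by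
    refine cauchySeq_range_of_norm_bounded
      (g := fun k => C * (((k : ℝ) + 1) * (b k - b (k + 1)))) ?_ fun k => ?_
    · simp_rw [← Finset.mul_sum, sum_succ_mul_sub_succ]
      exact ((hs.hasSum.tendsto_sum_nat.sub mul_tendsto).const_mul C).cauchySeq
    · have step_nonneg : 0 ≤ b k - b (k + 1) := sub_nonneg.2 (hb k.le_succ)
      calc ‖(b (k + 1) - b k) • ∑ j ∈ Finset.range (k + 1), z j‖
          = (b k - b (k + 1)) * ‖∑ j ∈ Finset.range (k + 1), z j‖ := by
            rw [norm_smul, norm_sub_rev, Real.norm_of_nonneg step_nonneg]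
        _ ≤ (b k - b (k + 1)) * (C * (k + 1 : ℕ)) :=
            mul_le_mul_of_nonneg_left (hz _) step_nonneg
        _ = C * (((k : ℝ) + 1) * (b k - b (k + 1))) := by push_cast; ring
  rw [← cauchySeq_shift 1]
  simp_rw [Finset.sum_range_by_parts _ _ (_ + 1), Nat.add_sub_cancel, sub_eq_add_neg (_ • _)]
  exact boundary_tendsto.cauchySeq.add differences_cauchy.neg

end SummationByParts

/-! ### Regular summation methods -/

section RegularSummation

variable {ι E : Type*} [NormedAddCommGroup E] [NormedSpace ℝ E] {f : Filter ι}

lemma tendsto_sum_smul_zero_of_tendsto_zero {s : ι → Finset ℕ} {c : ι → ℕ → ℝ} {u : ℕ → E}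
    (hc : ∀ i k, 0 ≤ c i k) (hsum : ∀ i, ∑ k ∈ s i, c i k ≤ 1)
    (hlim : ∀ k, Tendsto (fun i => c i k) f (𝓝 0)) (hu : Tendsto u atTop (𝓝 0)) :
    Tendsto (fun i => ∑ k ∈ s i, c i k • u k) f (𝓝 0) := by
  rw [Metric.tendsto_nhds]
  intro ε hε
  obtain ⟨L, hL⟩ := Metric.tendsto_atTop.1 hu (ε / 2) (half_pos hε)
  have head_tendsto : Tendsto (fun i => ∑ k ∈ Finset.range L, c i k * ‖u k‖) f (𝓝 0) := by
    simpa using tendsto_finsetSum (Finset.range L) fun k _ => (hlim k).mul_const ‖u k‖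
  filter_upwards [head_tendsto.eventually_lt_const (half_pos hε)] with i head_lt
  have head_le : ∑ k ∈ s i with k < L, c i k * ‖u k‖ ≤ ∑ k ∈ Finset.range L, c i k * ‖u k‖ :=
    Finset.sum_le_sum_of_subset_of_nonneg
      (fun k hk => Finset.mem_range.2 (Finset.mem_filter.1 hk).2)
      fun k _ _ => mul_nonneg (hc i k) (norm_nonneg _)
  have tail_le : ∑ k ∈ s i with ¬ k < L, c i k * ‖u k‖ ≤ ε / 2 :=
    calc ∑ k ∈ s i with ¬ k < L, c i k * ‖u k‖
        ≤ ∑ k ∈ s i with ¬ k < L, c i k * (ε / 2) := by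
          refine Finset.sum_le_sum fun k hk => mul_le_mul_of_nonneg_left ?_ (hc i k)
          simpa using (hL k (not_lt.1 (Finset.mem_filter.1 hk).2)).le
      _ ≤ ∑ k ∈ s i, c i k * (ε / 2) :=
          Finset.sum_le_sum_of_subset_of_nonneg (Finset.filter_subset _ _)
            fun k _ _ => mul_nonneg (hc i k) (half_pos hε).le
      _ ≤ ε / 2 := by
          rw [← Finset.sum_mul]
          exact mul_le_of_le_one_left (half_pos hε).le (hsum i)
  calc dist (∑ k ∈ s i, c i k • u k) 0 ≤ ∑ k ∈ s i, c i k * ‖u k‖ := by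
        rw [dist_zero_right]
        refine norm_sum_le_of_le _ fun k _ => ?_
        rw [norm_smul, Real.norm_of_nonneg (hc i k)]
    _ = ∑ k ∈ s i with k < L, c i k * ‖u k‖ + ∑ k ∈ s i with ¬ k < L, c i k * ‖u k‖ :=
        (Finset.sum_filter_add_sum_filter_not _ _ _).symm
    _ < ε := by linarith

/-- The regularity half of the Silverman–Toeplitz theorem, for nonnegative weights. -/
lemma tendsto_sum_smul_of_tendsto {s : ι → Finset ℕ} {c : ι → ℕ → ℝ} {u : ℕ → E} {S : E}
    (hc : ∀ i k, 0 ≤ c i k) (hsum : ∀ i, ∑ k ∈ s i, c i k = 1)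
    (hlim : ∀ k, Tendsto (fun i => c i k) f (𝓝 0)) (hu : Tendsto u atTop (𝓝 S)) :
    Tendsto (fun i => ∑ k ∈ s i, c i k • u k) f (𝓝 S) := by
  rw [← tendsto_sub_nhds_zero_iff] at hu ⊢
  refine (tendsto_sum_smul_zero_of_tendsto_zero hc (fun i => (hsum i).le) hlim hu).congr
    fun i => ?_
  simp_rw [smul_sub, Finset.sum_sub_distrib, ← Finset.sum_smul, hsum, one_smul]

lemma tendsto_sum_smul_of_antitone_weights {r : ι → ℕ → ℝ} {N : ι → ℕ} {t : ℕ → E} {S : E}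
    (hr : ∀ i, Antitone (r i)) (hzero : ∀ i, r i 0 = 1) (hN : ∀ i, r i (N i + 1) = 0)
    (hlim : ∀ k, Tendsto (fun i => r i k) f (𝓝 1))
    (ht : Tendsto (fun n => ∑ k ∈ Finset.range n, t k) atTop (𝓝 S)) :
    Tendsto (fun i => ∑ k ∈ Finset.range (N i + 1), r i k • t k) f (𝓝 S) := by
  have by_parts (i : ι) : ∑ k ∈ Finset.range (N i + 1), r i k • t k
      = ∑ k ∈ Finset.range (N i + 1),
        (r i k - r i (k + 1)) • ∑ j ∈ Finset.range (k + 1), t j := by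
    rw [Finset.sum_range_by_parts, Nat.add_sub_cancel,
      Finset.sum_range_succ (fun k => (r i k - r i (k + 1)) • _), hN, sub_zero, sub_eq_neg_add,
      ← Finset.sum_neg_distrib]
    simp_rw [← neg_smul, neg_sub]
  simp_rw [by_parts]
  refine tendsto_sum_smul_of_tendsto (fun i k => sub_nonneg.2 (hr i k.le_succ)) (fun i => ?_)
    (fun k => ?_) ((tendsto_add_atTop_iff_nat 1).2 ht)
  · rw [Finset.sum_range_sub', hzero, hN, sub_zero]
  · simpa using (hlim k).sub (hlim (k + 1))

end RegularSummation

/-! ### Legendre polynomials -/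

lemma legendreP_bonnet (n : ℕ) (y : ℝ) :
    ((n : ℝ) + 2) * legendreP (n + 2) y
      = (2 * (n : ℝ) + 3) * y * legendreP (n + 1) y - ((n : ℝ) + 1) * legendreP n y := by
  rw [legendreP]
  field_simp

lemma legendreP_of_sq_eq_one {y : ℝ} (hy : y ^ 2 = 1) (n : ℕ) : legendreP n y = y ^ n := by
  induction n using Nat.twoStepInduction with
  | zero => simp [legendreP]
  | one => simp [legendreP]
  | more n ih₀ ih₁ =>
    have hn : (n : ℝ) + 2 ≠ 0 := by positivity
    apply mul_left_cancel₀ hn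
    rw [legendreP_bonnet, ih₀, ih₁]
    linear_combination ((n : ℝ) + 1) * y ^ n * hy

lemma legendreP_sq_sub_mul_add_sq_le (n : ℕ) (y : ℝ) :
    legendreP n y ^ 2 - 2 * y * legendreP n y * legendreP (n + 1) y + legendreP (n + 1) y ^ 2
      ≤ 1 - y ^ 2 := by
  induction n with
  | zero => simp only [legendreP]; linarith
  | succ n ih =>
    have hn : (n : ℝ) + 2 ≠ 0 := by positivity
    -- The Chebyshev recurrence, which is the case `δ = 0`, preserves this quadratic form.
    obtain ⟨δ, hδ⟩ : ∃ δ, ((n : ℝ) + 2) * δ = y * legendreP (n + 1) y - legendreP n y :=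
      ⟨(y * legendreP (n + 1) y - legendreP n y) / ((n : ℝ) + 2), mul_div_cancel₀ _ hn⟩
    have recurrence : legendreP (n + 2) y = 2 * y * legendreP (n + 1) y - legendreP n y - δ :=
      mul_left_cancel₀ hn (by linear_combination legendreP_bonnet n y + hδ)
    calc legendreP (n + 1) y ^ 2 - 2 * y * legendreP (n + 1) y * legendreP (n + 2) y
          + legendreP (n + 2) y ^ 2
        = legendreP n y ^ 2 - 2 * y * legendreP n y * legendreP (n + 1) y
          + legendreP (n + 1) y ^ 2 - (2 * (n : ℝ) + 3) * δ ^ 2 := by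
          rw [recurrence]
          linear_combination 2 * δ * hδ
      _ ≤ legendreP n y ^ 2 - 2 * y * legendreP n y * legendreP (n + 1) y
          + legendreP (n + 1) y ^ 2 := sub_le_self _ (by positivity)
      _ ≤ 1 - y ^ 2 := ih

lemma abs_legendreP_le_one {y : ℝ} (hy : |y| ≤ 1) (n : ℕ) : |legendreP n y| ≤ 1 := by
  rw [← sq_le_one_iff_abs_le_one] at hy ⊢
  rcases hy.eq_or_lt with hy | hy
  · rw [legendreP_of_sq_eq_one hy, pow_right_comm, hy, one_pow]
  · refine le_of_mul_le_mul_left ?_ (sub_pos.2 hy)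
    linarith [legendreP_sq_sub_mul_add_sq_le n y,
      sq_nonneg (legendreP (n + 1) y - y * legendreP n y)]

/-- The Christoffel–Darboux formula at the points `1` and `y`. -/
lemma one_sub_mul_sum_legendreP (n : ℕ) (y : ℝ) :
    (1 - y) * ∑ l ∈ Finset.range (n + 1), (2 * (l : ℝ) + 1) * legendreP l y
      = ((n : ℝ) + 1) * (legendreP n y - legendreP (n + 1) y) := by
  induction n with
  | zero => simp [legendreP]
  | succ n ih =>
    rw [Finset.sum_range_succ, mul_add, ih]
    push_cast
    linear_combination legendreP_bonnet n y

lemma abs_sum_legendreP_le {y : ℝ} (hy₁ : -1 ≤ y) (hy₂ : y < 1) (n : ℕ) :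
    |∑ l ∈ Finset.range n, (2 * (l : ℝ) + 1) * legendreP l y| ≤ 2 / (1 - y) * n := by
  have hpos : 0 < 1 - y := sub_pos.2 hy₂
  have le_one := abs_legendreP_le_one (abs_le.2 ⟨hy₁, hy₂.le⟩)
  rcases n with _ | n
  · simp
  rw [div_mul_eq_mul_div, le_div_iff₀' hpos]
  calc (1 - y) * |∑ l ∈ Finset.range (n + 1), (2 * (l : ℝ) + 1) * legendreP l y|
      = ((n : ℝ) + 1) * |legendreP n y - legendreP (n + 1) y| := by
        have hn : (0 : ℝ) < n + 1 := n.cast_add_one_pos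
        simpa [abs_mul, abs_of_pos hpos, abs_of_pos hn]
          using congrArg abs (one_sub_mul_sum_legendreP n y)
    _ ≤ ((n : ℝ) + 1) * (1 + 1) := by
        gcongr
        exact (abs_sub _ _).trans (add_le_add (le_one n) (le_one (n + 1)))
    _ = 2 * (n + 1 : ℕ) := by push_cast; ring

lemma antitone_one_div_mul_succ_add {w : ℝ} (hw : 0 < w) :
    Antitone fun l : ℕ => 1 / ((l : ℝ) * ((l : ℝ) + 1) + w) := by
  intro l m hlm
  dsimp only
  gcongr

lemma summable_one_div_mul_succ_add {w : ℝ} (hw : 0 < w) :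
    Summable fun l : ℕ => 1 / ((l : ℝ) * ((l : ℝ) + 1) + w) := by
  rw [← summable_nat_add_iff 1]
  refine Summable.of_nonneg_of_le (fun l => by positivity) (fun l => ?_)
    ((summable_nat_add_iff 1).2 (Real.summable_one_div_nat_pow.2 one_lt_two))
  gcongr
  nlinarith [(l + 1 : ℕ).cast_nonneg (α := ℝ)]

lemma exists_tendsto_screened_series {w y : ℝ} (hw : 0 < w) (hy₁ : -1 ≤ y) (hy₂ : y < 1) :
    ∃ S, Tendsto (fun N : ℕ => ∑ l ∈ Finset.range N,
      (2 * (l : ℝ) + 1) * legendreP l y / ((l : ℝ) * ((l : ℝ) + 1) + w)) atTop (𝓝 S) := by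
  refine cauchySeq_tendsto_of_complete ?_
  simpa only [smul_eq_mul, one_div_mul_eq_div] using
    cauchySeq_sum_smul_of_antitone_of_summable (antitone_one_div_mul_succ_add hw)
      (z := fun l => (2 * (l : ℝ) + 1) * legendreP l y) (summable_one_div_mul_succ_add hw)
      (abs_sum_legendreP_le hy₁ hy₂)

/-! ### De la Vallée Poussin means -/

/-- The weight `n! (n+1)! / ((n-l)! (n+l+1)!)` of the `l`-th term of a series in its `n`-th
de la Vallée Poussin mean on the sphere. Written with falling and rising factorials, it vanishes
for `l > n` without any case distinction. -/
noncomputable def valleePoussinWeight (n l : ℕ) : ℝ :=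
  n.descFactorial l / (n + 2).ascFactorial l

/-- The `n`-th de la Vallée Poussin mean on the sphere of the series `∑ t l`, a weighted partial
sum that approaches the sum of the series as `n → ∞`. -/
noncomputable def valleePoussinMean (t : ℕ → ℝ) (n : ℕ) : ℝ :=
  ∑ l ∈ Finset.range (n + 1), valleePoussinWeight n l * t l

lemma valleePoussinWeight_zero_right (n : ℕ) : valleePoussinWeight n 0 = 1 := by
  simp [valleePoussinWeight]

lemma valleePoussinWeight_of_lt {n l : ℕ} (h : n < l) : valleePoussinWeight n l = 0 := by
  simp [valleePoussinWeight, Nat.descFactorial_of_lt h]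

lemma valleePoussinWeight_nonneg (n l : ℕ) : 0 ≤ valleePoussinWeight n l := by
  unfold valleePoussinWeight
  positivity

lemma valleePoussinWeight_succ_right (n l : ℕ) :
    valleePoussinWeight n (l + 1)
      = valleePoussinWeight n l * (((n : ℝ) - l) / ((n : ℝ) + l + 2)) := by
  rcases le_or_gt l n with h | h
  · simp only [valleePoussinWeight, Nat.descFactorial_succ, Nat.ascFactorial_succ]
    push_cast [h]
    rw [mul_comm, mul_comm ((n : ℝ) + 2 + l), mul_div_mul_comm, add_right_comm]
  · rw [valleePoussinWeight_of_lt h, valleePoussinWeight_of_lt (h.trans l.lt_succ_self), zero_mul]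

lemma valleePoussinWeight_antitone (n : ℕ) : Antitone (valleePoussinWeight n) := by
  refine antitone_nat_of_succ_le fun l => ?_
  rw [valleePoussinWeight_succ_right]
  refine mul_le_of_le_one_right (valleePoussinWeight_nonneg n l) ?_
  rw [div_le_one (by positivity)]
  linarith [l.cast_nonneg (α := ℝ)]

lemma valleePoussinWeight_eq_succ_left_mul (n l : ℕ) :
    valleePoussinWeight n l
      = valleePoussinWeight (n + 1) l
        * (1 - (l : ℝ) * ((l : ℝ) + 1) / (((n : ℝ) + 1) * ((n : ℝ) + 2))) := by
  induction l with
  | zero => simp [valleePoussinWeight_zero_right]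
  | succ l ih =>
    rw [valleePoussinWeight_succ_right, valleePoussinWeight_succ_right, ih]
    push_cast
    field_simp
    ring

lemma tendsto_valleePoussinWeight (l : ℕ) :
    Tendsto (fun n => valleePoussinWeight n l) atTop (𝓝 1) := by
  induction l with
  | zero => simp [valleePoussinWeight_zero_right]
  | succ l ih =>
    have ratio_tendsto :
        Tendsto (fun n : ℕ => ((n : ℝ) - l) / ((n : ℝ) + l + 2)) atTop (𝓝 1) := by
      have := tendsto_add_mul_div_add_mul_atTop_nhds (𝕜 := ℝ) (-l) (l + 2) 1 one_ne_zero
      rw [div_one] at this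
      exact this.congr fun n => by congr 1 <;> ring
    simpa [valleePoussinWeight_succ_right] using ih.mul ratio_tendsto

lemma tendsto_valleePoussinMean {t : ℕ → ℝ} {S : ℝ}
    (ht : Tendsto (fun n => ∑ l ∈ Finset.range n, t l) atTop (𝓝 S)) :
    Tendsto (valleePoussinMean t) atTop (𝓝 S) :=
  tendsto_sum_smul_of_antitone_weights valleePoussinWeight_antitone valleePoussinWeight_zero_right
    (fun n => valleePoussinWeight_of_lt n.lt_succ_self) tendsto_valleePoussinWeight ht

/-! ### The de la Vallée Poussin kernel -/

/-- By Bonnet's recurrence, the right-hand combination of neighbouring weights is what multiplying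
the series `∑ (2l+1) ρ n l P l y` by `1 + y` does to its coefficients. -/
lemma valleePoussinWeight_bonnet (n l : ℕ) :
    2 * ((n : ℝ) + 1) * (2 * (l : ℝ) + 3) * valleePoussinWeight (n + 1) (l + 1)
      = ((n : ℝ) + 2) * ((2 * (l : ℝ) + 3) * valleePoussinWeight n (l + 1)
        + ((l : ℝ) + 1) * valleePoussinWeight n l
        + ((l : ℝ) + 2) * valleePoussinWeight n (l + 2)) := by
  rw [valleePoussinWeight_succ_right n (l + 1), valleePoussinWeight_succ_right n l,
    valleePoussinWeight_eq_succ_left_mul n l, valleePoussinWeight_succ_right (n + 1) l]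
  push_cast
  field_simp
  ring

lemma sum_valleePoussinWeight_succ_mul_legendreP (n N : ℕ) (y : ℝ) :
    2 * ((n : ℝ) + 1) * ∑ l ∈ Finset.range (N + 1),
        valleePoussinWeight (n + 1) l * ((2 * (l : ℝ) + 1) * legendreP l y)
      = ((n : ℝ) + 2) * ((1 + y) * ∑ l ∈ Finset.range (N + 1),
          valleePoussinWeight n l * ((2 * (l : ℝ) + 1) * legendreP l y)
        + ((N : ℝ) + 1) * (valleePoussinWeight n (N + 1) * legendreP N y
          - valleePoussinWeight n N * legendreP (N + 1) y)) := by
  induction N with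
  | zero =>
    simp only [zero_add, Finset.sum_range_one, valleePoussinWeight_succ_right,
      valleePoussinWeight_zero_right, legendreP, Nat.cast_zero]
    field_simp
    ring
  | succ N ih =>
    rw [Finset.sum_range_succ, Finset.sum_range_succ _ (N + 1), mul_add, ih]
    push_cast
    linear_combination legendreP (N + 1) y * valleePoussinWeight_bonnet n N
      + ((n : ℝ) + 2) * valleePoussinWeight n (N + 1) * legendreP_bonnet N y

lemma valleePoussinMean_legendreP (y : ℝ) (n : ℕ) :
    valleePoussinMean (fun l => (2 * (l : ℝ) + 1) * legendreP l y) n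
      = ((n : ℝ) + 1) * ((1 + y) / 2) ^ n := by
  induction n with
  | zero => simp [valleePoussinMean, valleePoussinWeight_zero_right, legendreP]
  | succ n ih =>
    have recurrence := sum_valleePoussinWeight_succ_mul_legendreP n (n + 1) y
    rw [Finset.sum_range_succ (fun l : ℕ => valleePoussinWeight n l * _) (n + 1),
      valleePoussinWeight_of_lt (by lia : n < n + 1),
      valleePoussinWeight_of_lt (by lia : n < n + 1 + 1)] at recurrence
    have hn : 2 * ((n : ℝ) + 1) ≠ 0 := by positivity
    apply mul_left_cancel₀ hn
    unfold valleePoussinMean at ih ⊢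
    rw [recurrence, ih]
    push_cast
    ring

/-! ### Positivity -/

lemma valleePoussinMean_screened_succ {w : ℝ} (hw : 0 < w) (a : ℕ → ℝ) (n : ℕ) :
    (1 + w / (((n : ℝ) + 1) * ((n : ℝ) + 2)))
        * valleePoussinMean (fun l => a l / ((l : ℝ) * ((l : ℝ) + 1) + w)) (n + 1)
      = valleePoussinMean (fun l => a l / ((l : ℝ) * ((l : ℝ) + 1) + w)) n
        + valleePoussinMean a (n + 1) / (((n : ℝ) + 1) * ((n : ℝ) + 2)) := by
  have extend_range : valleePoussinMean (fun l => a l / ((l : ℝ) * ((l : ℝ) + 1) + w)) n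
      = ∑ l ∈ Finset.range (n + 1 + 1),
        valleePoussinWeight n l * (a l / ((l : ℝ) * ((l : ℝ) + 1) + w)) := by
    rw [Finset.sum_range_succ, valleePoussinWeight_of_lt n.lt_succ_self, zero_mul, add_zero,
      valleePoussinMean]
  rw [extend_range, valleePoussinMean, valleePoussinMean, Finset.mul_sum, Finset.sum_div,
    ← Finset.sum_add_distrib]
  refine Finset.sum_congr rfl fun l _ => ?_
  rw [valleePoussinWeight_eq_succ_left_mul n l]
  field_simp
  ring

lemma valleePoussinMean_screened_legendreP_le {w y : ℝ} (hw : 0 < w) (hy : -1 ≤ y) (n : ℕ) :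
    valleePoussinMean
        (fun l => (2 * (l : ℝ) + 1) * legendreP l y / ((l : ℝ) * ((l : ℝ) + 1) + w)) n
      ≤ (1 + w / (((n : ℝ) + 1) * ((n : ℝ) + 2))) * valleePoussinMean
        (fun l => (2 * (l : ℝ) + 1) * legendreP l y / ((l : ℝ) * ((l : ℝ) + 1) + w)) (n + 1) := by
  have base_nonneg : 0 ≤ (1 + y) / 2 := by linarith
  rw [valleePoussinMean_screened_succ hw, valleePoussinMean_legendreP]
  exact le_add_of_nonneg_right (by positivity)

lemma exp_div_le_valleePoussinMean_screened_legendreP {w y : ℝ} (hw : 0 < w) (hy : -1 ≤ y)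
    (n : ℕ) :
    Real.exp (-(w * (n / (n + 1)))) / w
      ≤ valleePoussinMean
        (fun l => (2 * (l : ℝ) + 1) * legendreP l y / ((l : ℝ) * ((l : ℝ) + 1) + w)) n := by
  induction n with
  | zero => simp [valleePoussinMean, valleePoussinWeight_zero_right, legendreP]
  | succ n ih =>
    have mean_le := valleePoussinMean_screened_legendreP_le hw hy n
    set σ := valleePoussinMean
      (fun l => (2 * (l : ℝ) + 1) * legendreP l y / ((l : ℝ) * ((l : ℝ) + 1) + w))
    set x := w / (((n : ℝ) + 1) * ((n : ℝ) + 2)) with hx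
    have x_pos : 0 < x := by positivity
    have exponent : w * (n / (n + 1)) = w * ((n + 1 : ℕ) / ((n + 1 : ℕ) + 1)) - x := by
      rw [hx]
      push_cast
      field_simp
      ring
    have σ_succ_pos : 0 < σ (n + 1) := by
      have : 0 < σ n := lt_of_lt_of_le (by positivity) ih
      exact pos_of_mul_pos_right (this.trans_le mean_le) (add_pos one_pos x_pos).le
    refine le_of_mul_le_mul_left ?_ (Real.exp_pos x)
    calc Real.exp x * (Real.exp (-(w * ((n + 1 : ℕ) / ((n + 1 : ℕ) + 1)))) / w)
        = Real.exp (-(w * (n / (n + 1)))) / w := by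
          rw [exponent, ← mul_div_assoc, ← Real.exp_add, neg_sub, sub_eq_add_neg]
      _ ≤ σ n := ih
      _ ≤ (1 + x) * σ (n + 1) := mean_le
      _ ≤ Real.exp x * σ (n + 1) := by
          gcongr
          linarith [Real.add_one_le_exp x]

lemma exp_neg_div_le_of_tendsto_screened_series {w y S : ℝ} (hw : 0 < w) (hy : -1 ≤ y)
    (hS : Tendsto (fun N : ℕ => ∑ l ∈ Finset.range N,
      (2 * (l : ℝ) + 1) * legendreP l y / ((l : ℝ) * ((l : ℝ) + 1) + w)) atTop (𝓝 S)) :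
    Real.exp (-w) / w ≤ S := by
  refine ge_of_tendsto' (tendsto_valleePoussinMean hS) fun n =>
    le_trans ?_ (exp_div_le_valleePoussinMean_screened_legendreP hw hy n)
  gcongr
  refine mul_le_of_le_one_right hw.le ((div_le_one n.cast_add_one_pos).2 ?_)
  linarith

theorem screened_series_positive_general (w : ℝ) (hw : 0 < w) (y : ℝ)
    (hy₁ : -1 ≤ y) (hy₂ : y < 1) :
    ∃ S : ℝ, Tendsto (fun N : ℕ => ∑ l ∈ Finset.range N,
      (2 * (l : ℝ) + 1) * legendreP l y / ((l : ℝ) * ((l : ℝ) + 1) + w)) atTop (𝓝 S) ∧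
      0 < S := by
  obtain ⟨S, hS⟩ := exists_tendsto_screened_series hw hy₁ hy₂
  have S_ge : Real.exp (-w) / w ≤ S := exp_neg_div_le_of_tendsto_screened_series hw hy₁ hS
  exact ⟨S, hS, lt_of_lt_of_le (by positivity) S_ge⟩

/-- For `w > 1/4` and `-1 ≤ y < 1`, the sum of the series
`∑ (2l+1) P l y / (l(l+1)+w)` is strictly positive (equivalently, the Green's function
of the screened Poisson equation on the sphere is strictly negative for `0 < γ ≤ π`). -/
theorem screened_series_positive (w : ℝ) (hw : 1 / 4 < w) (y : ℝ)
    (hy₁ : -1 ≤ y) (hy₂ : y < 1) :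
    ∃ S : ℝ, Tendsto (fun N : ℕ => ∑ l ∈ Finset.range N,
      (2 * (l : ℝ) + 1) * legendreP l y / ((l : ℝ) * ((l : ℝ) + 1) + w)) atTop (𝓝 S) ∧
      0 < S :=
  screened_series_positive_general w (one_div_pos.2 four_pos |>.trans hw) y hy₁ hy₂
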